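/- arXiv:1005.3876 — 2 statements merged into one kernel-verified Lean document; each statement's English description precedes it below -/
import Mathlib

section
/- Let G be a finite group, N a normal subgroup of G, and n ≥ 1 an integer. Then |Hom(ℤ^n, G)| ≤ |Hom(ℤ^n, G/N)| · |Hom(ℤ^n, N)|. -/
/-!
Fix the image `s` in `G ⧸ N` of a commuting tuple. If `a` and `b` are two possible `i`-th entries
of a commuting lift of `s` with the same other entries, then `b⁻¹ * a` lies in `N` and still
commutes with those other entries. Hence replacing `s i` by `1` does not decrease the number of
commuting lifts. Doing so for every `i` shows that `s` has at most as many commuting lifts as the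
trivial tuple, whose commuting lifts are the commuting tuples of `N`. Only the commutation
relations between distinct entries matter, so any prescribed set of them can be imposed.
-/

open Cardinal Function

universe u v

/-- The tuples in `G` whose entries commute along the relation `r`. When `r` is the adjacency of a
graph, these are the homomorphisms to `G` from the right-angled Artin group of that graph; when `r`
always holds, they are the commuting tuples. -/
def commutingTuples {ι : Type v} (r : ι → ι → Prop) (G : Type u) [Group G] : Set (ι → G) :=
  {t | ∀ i j, r i j → Commute (t i) (t j)}

/-- The tuples in `G` commuting along `r` that lift a prescribed tuple `s` of cosets of `N`: the
fibre over `s` of the projection `commutingTuples r G → commutingTuples r (G ⧸ N)`. -/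
def commutingLifts {ι : Type v} {G : Type u} [Group G] (r : ι → ι → Prop) (N : Subgroup G)
    (s : ι → G ⧸ N) : Set (ι → G) :=
  {t ∈ commutingTuples r G | ∀ i, (t i : G ⧸ N) = s i}

theorem mk_le_mk_of_update_mem {ι : Type v} {α : Type u} [DecidableEq ι] {S T : Set (ι → α)}
    (i : ι) (h : ∀ t, ∃ f : α → α, Injective f ∧ ∀ a, update t i a ∈ S → update t i (f a) ∈ T) :
    #S ≤ #T := by
  rcases isEmpty_or_nonempty α with _ | ⟨⟨c⟩⟩
  · have : IsEmpty (ι → α) := ⟨fun t => isEmptyElim (t i)⟩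
    simp
  choose f f_injective f_mem using h
  -- Erasing the `i`-th entry makes the choice of `f` depend on the other entries only.
  let erase (t : ι → α) : ι → α := update t i c
  let φ (t : ι → α) : ι → α := update t i (f (erase t) (t i))
  have φ_mem (t : S) : φ t ∈ T := by
    simpa [φ, erase] using f_mem (erase t) (t.1 i) (by simp [erase])
  have φ_injective : Injective φ := by
    intro t u htu
    have erase_eq : erase t = erase u := by
      simpa [φ, erase] using congrArg erase htu
    have entry_eq : t i = u i :=
      f_injective (erase u) (by simpa [φ, erase_eq] using congrFun htu i)
    calc t = update (erase t) i (t i) := by simp [erase]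
      _ = update (erase u) i (u i) := by rw [erase_eq, entry_eq]
      _ = u := by simp [erase]
  exact mk_le_of_injective (f := fun t : S => (⟨φ t, φ_mem t⟩ : T))
    fun t u htu => Subtype.ext (φ_injective (congrArg Subtype.val htu))

section Lifts

variable {ι : Type v} {G : Type u} [Group G] {r : ι → ι → Prop} (N : Subgroup G) [N.Normal]

variable {N} in
theorem update_inv_mul_mem_commutingLifts [DecidableEq ι] {s : ι → G ⧸ N} {t : ι → G} {i : ι}
    {a b : G} (ha : update t i a ∈ commutingLifts r N s)
    (hb : update t i b ∈ commutingLifts r N s) :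
    update t i (b⁻¹ * a) ∈ commutingLifts r N (update s i 1) := by
  refine ⟨fun j k hjk => ?_, fun j => ?_⟩
  · have commute_a := ha.1 j k hjk
    have commute_b := hb.1 j k hjk
    rcases eq_or_ne j i with rfl | hj
    · rcases eq_or_ne k j with rfl | hk
      · exact Commute.refl _
      · simp only [update_self, update_of_ne hk] at commute_a commute_b ⊢
        exact commute_b.inv_left.mul_left commute_a
    · rcases eq_or_ne k i with rfl | hk
      · simp only [update_self, update_of_ne hj] at commute_a commute_b ⊢
        exact commute_b.inv_right.mul_right commute_a
      · simpa only [update_of_ne hj, update_of_ne hk] using commute_a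
  · have coset_a := ha.2 j
    have coset_b := hb.2 j
    rcases eq_or_ne j i with rfl | hj
    · simp only [update_self] at coset_a coset_b ⊢
      rw [QuotientGroup.mk_mul, QuotientGroup.mk_inv, coset_a, coset_b, inv_mul_cancel]
    · simpa only [update_of_ne hj] using coset_a

theorem mk_commutingLifts_le_update [DecidableEq ι] (s : ι → G ⧸ N) (i : ι) :
    #(commutingLifts r N s) ≤ #(commutingLifts r N (update s i 1)) := by
  refine mk_le_mk_of_update_mem i fun t => ?_
  by_cases h : ∃ b, update t i b ∈ commutingLifts r N s
  · obtain ⟨b, hb⟩ := h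
    exact ⟨(b⁻¹ * ·), mul_right_injective b⁻¹,
      fun a ha => update_inv_mul_mem_commutingLifts ha hb⟩
  · exact ⟨id, injective_id, fun a ha => (h ⟨a, ha⟩).elim⟩

theorem mk_commutingLifts_le_one [Finite ι] (s : ι → G ⧸ N) :
    #(commutingLifts r N s) ≤ #(commutingLifts r N 1) := by
  classical
  have := Fintype.ofFinite ι
  suffices h : ∀ S : Finset ι, #(commutingLifts r N s) ≤ #(commutingLifts r N (S.piecewise 1 s)) by
    simpa only [Finset.piecewise_univ] using h Finset.univ
  intro S
  induction S using Finset.induction_on with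
  | empty => rw [Finset.piecewise_empty]
  | insert i S _ ih =>
    rw [Finset.piecewise_insert]
    exact ih.trans (mk_commutingLifts_le_update N _ i)

theorem mk_commutingLifts_one_le : #(commutingLifts r N 1) ≤ #(commutingTuples r N) := by
  let toTuple (t : commutingLifts r N 1) : commutingTuples r N :=
    ⟨fun i => ⟨t.1 i, (QuotientGroup.eq_one_iff _).1 (t.2.2 i)⟩,
      fun i j hij => Subtype.ext (t.2.1 i j hij)⟩
  refine mk_le_of_injective (f := toTuple) fun t u htu => ?_
  ext i
  exact congrArg Subtype.val (congrFun (congrArg Subtype.val htu) i)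

end Lifts

theorem stmt_14_general {ι : Type v} [Finite ι] {G : Type u} [Group G] (r : ι → ι → Prop)
    (N : Subgroup G) [N.Normal] :
    #(commutingTuples r G) ≤ #(commutingTuples r (G ⧸ N)) * #(commutingTuples r N) := by
  let π (t : commutingTuples r G) : commutingTuples r (G ⧸ N) :=
    ⟨fun i => t.1 i, fun i j hij => (t.2 i j hij).map (QuotientGroup.mk' N)⟩
  have mk_fiber_le (s : commutingTuples r (G ⧸ N)) : #{t // π t = s} ≤ #(commutingTuples r N) :=
    calc #{t // π t = s}
      _ ≤ #(commutingLifts r N s.1) :=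
        mk_le_of_injective (f := fun t => ⟨t.1.1, t.1.2, congrFun (congrArg Subtype.val t.2)⟩)
          fun t u htu => Subtype.ext (Subtype.ext (Subtype.mk.inj htu))
      _ ≤ #(commutingLifts r N 1) := mk_commutingLifts_le_one N s.1
      _ ≤ #(commutingTuples r N) := mk_commutingLifts_one_le N
  calc #(commutingTuples r G)
    _ = Cardinal.sum fun s => #{t // π t = s} := by
      rw [← mk_sigma, mk_congr (Equiv.sigmaFiberEquiv π)]
    _ ≤ Cardinal.sum fun _ : commutingTuples r (G ⧸ N) => #(commutingTuples r N) :=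
      sum_le_sum _ _ mk_fiber_le
    _ = #(commutingTuples r (G ⧸ N)) * #(commutingTuples r N) := sum_const' _ _

/-- Let `G` be a finite group, `N ⊴ G`, and `n ≥ 1`.  Then
`|Hom(ℤ^n, G)| ≤ |Hom(ℤ^n, G/N)|·|Hom(ℤ^n, N)|` (counting commuting `n`-tuples). -/
theorem stmt_14 {G : Type*} [Group G] [Fintype G] (N : Subgroup G) [N.Normal]
    (n : ℕ) (hn : 1 ≤ n) :
    Nat.card {t : Fin n → G // ∀ i j, Commute (t i) (t j)}
      ≤ Nat.card {t : Fin n → G ⧸ N // ∀ i j, Commute (t i) (t j)}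
        * Nat.card {t : Fin n → ↥N // ∀ i j, Commute (t i) (t j)} := by
  have h := toNat_le_toNat (stmt_14_general (fun _ _ : Fin n => True) N)
    (mul_lt_aleph0 (lt_aleph0_of_finite _) (lt_aleph0_of_finite _))
  simpa [Nat.card, commutingTuples, Set.coe_ofPred] using h
end

section
/- Let G be a finite nonabelian group, let m = |G : Z(G)| be the index of the center, and let p be the smallest prime divisor of m. Then for every integer n ≥ 0, (m(n+1) − n) · |G|^{n+1} ≤ m^{n+1} · |Hom(ℤ^{n+1}, G)| and p^{2n+1} · |Hom(ℤ^{n+1}, G)| ≤ (p^{n+1} + p^n − 1) · |G|^{n+1} (equivalently, (mn + m − n)/m^{n+1} ≤ P_2(G, n+1) ≤ (p^{n+1} + p^n − 1)/p^{2n+1}, where P_2(G,s) = |Hom(ℤ^s,G)|/|G|^s). -/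
/-!
Splitting off the first entry `g` of a commuting `(s + 1)`-tuple leaves a commuting `s`-tuple in the
centralizer of `g`. With `c s = |Hom(ℤ ^ s, G)|` this gives `c (s + 1) = |Z(G)| * c s + S`, where
`S` is the sum of `|Hom(ℤ ^ s, C(g))|` over the noncentral `g`. Each summand is at least
`|Z(G)| ^ s`, and at most `(|G| / p) ^ s` because the index of a proper subgroup containing `Z(G)`
is a divisor of `m` other than `1`. Both bounds follow by induction; the upper one also needs
`p ^ 2 ≤ m`, which holds because `m`, the order of `G / Z(G)`, is never prime.
-/

open Subgroup

/-- The commuting `s`-tuples of elements of `M`. For a group `M` they correspond to the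
homomorphisms from `ℤ ^ s` to `M`, and their number is written `|Hom(ℤ ^ s, M)|`. -/
abbrev CommutingTuple (M : Type*) [Mul M] (s : ℕ) : Type _ :=
  {t : Fin s → M // ∀ i j, Commute (t i) (t j)}

namespace CommutingTuple

section Mul

variable {M N : Type*} [Mul M] [Mul N]

theorem card_le_pow [Finite M] (s : ℕ) : Nat.card (CommutingTuple M s) ≤ Nat.card M ^ s := by
  simpa [Nat.card_fun] using
    Nat.card_le_card_of_injective (Subtype.val : CommutingTuple M s → _) Subtype.val_injective

theorem pow_mul_card_le_pow [Finite M] {p a : ℕ} (h : p * Nat.card M ≤ a) (s : ℕ) :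
    p ^ s * Nat.card (CommutingTuple M s) ≤ a ^ s :=
  calc p ^ s * Nat.card (CommutingTuple M s)
      ≤ p ^ s * Nat.card M ^ s := by gcongr; exact card_le_pow s
    _ = (p * Nat.card M) ^ s := (mul_pow ..).symm
    _ ≤ a ^ s := by gcongr

theorem card_eq_pow [IsMulCommutative M] (s : ℕ) :
    Nat.card (CommutingTuple M s) = Nat.card M ^ s := by
  have hcomm (t : Fin s → M) (i j : Fin s) : Commute (t i) (t j) := mul_comm' (t i) (t j)
  rw [Nat.card_congr (Equiv.subtypeUnivEquiv hcomm), Nat.card_fun, Nat.card_fin]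

theorem card_one : Nat.card (CommutingTuple M 1) = Nat.card M :=
  Nat.card_congr <| (Equiv.subtypeUnivEquiv fun t i j => by
    rw [Subsingleton.elim i j]).trans (Equiv.funUnique (Fin 1) M)

theorem card_le_of_injective [Finite N] (f : M →ₙ* N) (hf : Function.Injective f) (s : ℕ) :
    Nat.card (CommutingTuple M s) ≤ Nat.card (CommutingTuple N s) :=
  Nat.card_le_card_of_injective
    (Subtype.map (f ∘ ·) fun _ ht i j => (ht i j).map f)
    (Subtype.map_injective _ hf.comp_left)

theorem card_congr (e : M ≃* N) (s : ℕ) :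
    Nat.card (CommutingTuple M s) = Nat.card (CommutingTuple N s) :=
  Nat.card_congr <| (Equiv.piCongrRight fun _ => e.toEquiv).subtypeEquiv fun _ =>
    forall₂_congr fun _ _ => (commute_map_iff e.injective).symm

end Mul

variable {G : Type*} [Group G]

variable (G) in
/-- A commuting `(s + 1)`-tuple is an element `g` together with a commuting `s`-tuple in the
centralizer of `g`. -/
def consEquiv (s : ℕ) :
    CommutingTuple G (s + 1) ≃ Σ g : G, CommutingTuple (centralizer {g}) s where
  toFun t := ⟨t.1 0, fun i => ⟨t.1 i.succ, mem_centralizer_singleton_iff.2 (t.2 i.succ 0)⟩,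
    fun i j => Subtype.ext (t.2 i.succ j.succ)⟩
  invFun x := ⟨Fin.cons x.1 fun i => x.2.1 i, by
    obtain ⟨g, t, ht⟩ := x
    have hg (i : Fin s) : Commute (t i : G) g := mem_centralizer_singleton_iff.1 (t i).2
    exact Fin.cases (Fin.cases (Commute.refl g) fun j => (hg j).symm) fun i =>
      Fin.cases (hg i) fun j => congrArg Subtype.val (ht i j)⟩
  left_inv t := Subtype.ext (Fin.cons_self_tail t.1)
  right_inv _ := rfl

theorem card_centralizer_of_mem_center {g : G} (hg : g ∈ center G) (s : ℕ) :
    Nat.card (CommutingTuple (centralizer {g}) s) = Nat.card (CommutingTuple G s) := by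
  have htop : centralizer {g} = ⊤ :=
    centralizer_eq_top_iff_subset.2 (Set.singleton_subset_iff.2 hg)
  rw [htop, card_congr topEquiv]

theorem card_center_pow_le_card [Finite G] {H : Subgroup G} (hH : center G ≤ H) (s : ℕ) :
    Nat.card (center G) ^ s ≤ Nat.card (CommutingTuple H s) := by
  rw [← card_eq_pow]
  exact card_le_of_injective (inclusion hH : center G →ₙ* H) (inclusion_injective hH) s

section Recursion

variable [Finite G]

theorem card_succ [Fintype {g : G // g ∉ center G}] (s : ℕ) :
    Nat.card (CommutingTuple G (s + 1)) =
      Nat.card (center G) * Nat.card (CommutingTuple G s) +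
        ∑ g : {g : G // g ∉ center G}, Nat.card (CommutingTuple (centralizer {g.1}) s) := by
  classical
  cases nonempty_fintype G
  have hcentral : ∑ g : {g : G // g ∈ center G}, Nat.card (CommutingTuple (centralizer {g.1}) s) =
      Nat.card (center G) * Nat.card (CommutingTuple G s) := by
    rw [Finset.sum_congr rfl fun g _ => card_centralizer_of_mem_center g.2 s, Finset.sum_const,
      Finset.card_univ, ← Nat.card_eq_fintype_card, smul_eq_mul]
  rw [Nat.card_congr (consEquiv G s), Nat.card_sigma, ← hcentral,
    ← Fintype.sum_subtype_add_sum_subtype (· ∈ center G)]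
  congr!

theorem card_center_mul_card_add_le_card_succ {s b : ℕ}
    (hb : ∀ g ∉ center G, b ≤ Nat.card (CommutingTuple (centralizer {g}) s)) :
    Nat.card (center G) * Nat.card (CommutingTuple G s) + Nat.card {g : G // g ∉ center G} * b ≤
      Nat.card (CommutingTuple G (s + 1)) := by
  have := Fintype.ofFinite {g : G // g ∉ center G}
  rw [card_succ, Nat.card_eq_fintype_card (α := {g : G // g ∉ center G}), ← Finset.card_univ,
    ← smul_eq_mul (Finset.card _)]
  gcongr
  exact Finset.card_nsmul_le_sum _ _ _ fun g _ => hb g g.2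

theorem mul_card_succ_le {s k b : ℕ}
    (hb : ∀ g ∉ center G, k * Nat.card (CommutingTuple (centralizer {g}) s) ≤ b) :
    k * Nat.card (CommutingTuple G (s + 1)) ≤
      Nat.card (center G) * (k * Nat.card (CommutingTuple G s)) +
        Nat.card {g : G // g ∉ center G} * b := by
  have := Fintype.ofFinite {g : G // g ∉ center G}
  rw [card_succ, mul_add, mul_left_comm, Finset.mul_sum,
    Nat.card_eq_fintype_card (α := {g : G // g ∉ center G}), ← Finset.card_univ,
    ← smul_eq_mul (Finset.card _)]
  gcongr
  exact Finset.sum_le_card_nsmul _ _ _ fun g _ => hb g g.2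

variable (G) in
theorem card_center_add_card_noncentral :
    Nat.card (center G) + Nat.card {g : G // g ∉ center G} = Nat.card G := by
  classical
  rw [← Nat.card_sum, Nat.card_congr (Equiv.sumCompl (· ∈ center G))]

end Recursion

variable (G) in
/-- `(n + 1) * |G| * |Z(G)| ^ n - n * |Z(G)| ^ (n + 1)` is the number of `(n + 1)`-tuples with at
most one noncentral entry, and all of these commute. -/
theorem le_card_add [Finite G] (n : ℕ) :
    (n + 1) * Nat.card G * Nat.card (center G) ^ n ≤
      Nat.card (CommutingTuple G (n + 1)) + n * Nat.card (center G) ^ (n + 1) := by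
  induction n with
  | zero => rw [card_one]; simp
  | succ n ih =>
    have hsplit := card_center_add_card_noncentral G
    have hsucc := card_center_mul_card_add_le_card_succ fun g (_ : g ∉ center G) =>
      card_center_pow_le_card (center_le_centralizer {g}) (n + 1)
    set z := Nat.card (center G)
    set w := Nat.card {g : G // g ∉ center G}
    set c := Nat.card (CommutingTuple G (n + 1))
    calc (n + 1 + 1) * Nat.card G * z ^ (n + 1)
        = z * ((n + 1) * Nat.card G * z ^ n) + (z + w) * z ^ (n + 1) := by rw [hsplit]; ring
      _ ≤ z * (c + n * z ^ (n + 1)) + (z + w) * z ^ (n + 1) := by gcongr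
      _ = z * c + w * z ^ (n + 1) + (n + 1) * z ^ (n + 1 + 1) := by ring
      _ ≤ Nat.card (CommutingTuple G (n + 1 + 1)) + (n + 1) * z ^ (n + 1 + 1) := by gcongr

theorem pow_mul_card_add_le [Finite G] {p : ℕ} (hp : 0 < p)
    (hcentralizer : ∀ g ∉ center G, p * Nat.card (centralizer {g}) ≤ Nat.card G)
    (hcenter : p ^ 2 * Nat.card (center G) ≤ Nat.card G) (n : ℕ) :
    p ^ (2 * n + 1) * Nat.card (CommutingTuple G (n + 1)) + Nat.card G ^ (n + 1) ≤
      (p ^ (n + 1) + p ^ n) * Nat.card G ^ (n + 1) := by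
  induction n with
  | zero => rw [card_one]; simp [add_mul]
  | succ n ih =>
    have hsplit := card_center_add_card_noncentral G
    have hsucc := mul_card_succ_le fun g hg =>
      pow_mul_card_le_pow (hcentralizer g hg) (n + 1)
    obtain ⟨r, hr⟩ := Nat.exists_eq_add_of_le hcenter
    have hrp : r ≤ r * p ^ (n + 1) := Nat.le_mul_of_pos_right r (pow_pos hp _)
    set z := Nat.card (center G)
    set w := Nat.card {g : G // g ∉ center G}
    set a := Nat.card G
    set c := Nat.card (CommutingTuple G (n + 1))
    calc p ^ (2 * (n + 1) + 1) * Nat.card (CommutingTuple G (n + 1 + 1)) + a ^ (n + 1 + 1)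
        = p ^ (n + 2) * (p ^ (n + 1) * Nat.card (CommutingTuple G (n + 1 + 1))) +
            (p ^ 2 * z + r) * a ^ (n + 1) := by rw [← hr]; ring
      _ ≤ p ^ (n + 2) * (z * (p ^ (n + 1) * c) + w * a ^ (n + 1)) +
            (p ^ 2 * z + r) * a ^ (n + 1) := by gcongr
      _ = p ^ 2 * z * (p ^ (2 * n + 1) * c + a ^ (n + 1)) + r * a ^ (n + 1) +
            p ^ (n + 2) * w * a ^ (n + 1) := by ring
      _ ≤ p ^ 2 * z * ((p ^ (n + 1) + p ^ n) * a ^ (n + 1)) + r * p ^ (n + 1) * a ^ (n + 1) +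
            p ^ (n + 2) * w * a ^ (n + 1) := by gcongr
      _ = (p ^ (n + 1) * (p ^ 2 * z + r) + p ^ (n + 2) * (z + w)) * a ^ (n + 1) := by ring
      _ = (p ^ (n + 1 + 1) + p ^ (n + 1)) * a ^ (n + 1 + 1) := by rw [← hr, hsplit]; ring

end CommutingTuple

section Index

variable {G : Type*} [Group G]

theorem not_prime_index_center : ¬ (center G).index.Prime := by
  intro h
  have := Fact.mk h
  have : IsCyclic (G ⧸ center G) := isCyclic_of_prime_card (p := (center G).index) rfl
  have : IsMulCommutative G := isMulCommutative_of_isCyclic_quotient_center_self G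
  exact h.ne_one (index_eq_one.2 center_eq_top)

theorem minFac_index_mul_card_le {H K : Subgroup G} [K.FiniteIndex] (hHK : H ≤ K) (hK : K ≠ ⊤) :
    H.index.minFac * Nat.card K ≤ Nat.card G := by
  rw [← K.index_mul_card]
  gcongr
  exact Nat.minFac_le_of_dvd (one_lt_index_of_ne_top hK) (index_dvd_of_le hHK)

theorem minFac_index_center_sq_mul_card_center_le [(center G).FiniteIndex] :
    (center G).index.minFac ^ 2 * Nat.card (center G) ≤ Nat.card G := by
  rw [← (center G).index_mul_card]
  gcongr
  exact Nat.minFac_sq_le_self (Nat.pos_of_ne_zero FiniteIndex.index_ne_zero)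
    not_prime_index_center

end Index

theorem isLeast_minFac {m : ℕ} (hm : m ≠ 1) : IsLeast {q : ℕ | q.Prime ∧ q ∣ m} m.minFac :=
  ⟨⟨Nat.minFac_prime hm, m.minFac_dvd⟩, fun _ hq => Nat.minFac_le_of_dvd hq.1.two_le hq.2⟩

theorem index_center_mul_sub_mul_card_pow_le (G : Type*) [Group G] [Finite G] (n : ℕ) :
    ((center G).index * (n + 1) - n) * Nat.card G ^ (n + 1) ≤
      (center G).index ^ (n + 1) * Nat.card (CommutingTuple G (n + 1)) := by
  have hcard := (center G).index_mul_card
  set m := (center G).index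
  set z := Nat.card (center G)
  calc (m * (n + 1) - n) * Nat.card G ^ (n + 1)
      = m ^ (n + 1) * ((m * (n + 1) - n) * z ^ (n + 1)) := by rw [← hcard]; ring
    _ = m ^ (n + 1) * ((n + 1) * Nat.card G * z ^ n - n * z ^ (n + 1)) := by
        rw [Nat.sub_mul, ← hcard]; ring_nf
    _ ≤ m ^ (n + 1) * Nat.card (CommutingTuple G (n + 1)) := by
        gcongr
        exact Nat.sub_le_of_le_add (CommutingTuple.le_card_add G n)

theorem minFac_index_center_pow_mul_card_le (G : Type*) [Group G] [Finite G] (n : ℕ) :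
    (center G).index.minFac ^ (2 * n + 1) * Nat.card (CommutingTuple G (n + 1)) ≤
      ((center G).index.minFac ^ (n + 1) + (center G).index.minFac ^ n - 1) *
        Nat.card G ^ (n + 1) := by
  have hcentralizer (g : G) (hg : g ∉ center G) :
      (center G).index.minFac * Nat.card (centralizer {g}) ≤ Nat.card G :=
    minFac_index_mul_card_le (center_le_centralizer {g}) fun htop =>
      hg (Set.singleton_subset_iff.1 (centralizer_eq_top_iff_subset.1 htop))
  rw [Nat.sub_one_mul]
  exact Nat.le_sub_of_add_le <| CommutingTuple.pow_mul_card_add_le (Nat.minFac_pos _)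
    hcentralizer minFac_index_center_sq_mul_card_center_le n

/-- Let `G` be a finite nonabelian group, `m = |G : Z(G)|`, and `p` the
smallest prime divisor of `m`.  Then for every `n ≥ 0`,
`(m(n+1) − n)·|G|^{n+1} ≤ m^{n+1}·|Hom(ℤ^{n+1}, G)|` and
`p^{2n+1}·|Hom(ℤ^{n+1}, G)| ≤ (p^{n+1} + p^n − 1)·|G|^{n+1}`; equivalently
`(mn + m − n)/m^{n+1} ≤ P_2(G,n+1) ≤ (p^{n+1} + p^n − 1)/p^{2n+1}`. -/
theorem stmt_17 {G : Type*} [Group G] [Fintype G]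
    (hna : ∃ a b : G, a * b ≠ b * a)
    (m : ℕ) (hm : m = (Subgroup.center G).index)
    (p : ℕ) (hp : IsLeast {q : ℕ | q.Prime ∧ q ∣ m} p)
    (n : ℕ) :
    (m * (n + 1) - n) * (Nat.card G) ^ (n + 1)
        ≤ m ^ (n + 1) * Nat.card {t : Fin (n + 1) → G // ∀ i j, Commute (t i) (t j)}
      ∧ p ^ (2 * n + 1) * Nat.card {t : Fin (n + 1) → G // ∀ i j, Commute (t i) (t j)}
        ≤ (p ^ (n + 1) + p ^ n - 1) * (Nat.card G) ^ (n + 1) := by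
  have hm1 : m ≠ 1 := by
    rintro rfl
    obtain ⟨a, b, hab⟩ := hna
    have hcomm := center_eq_top_iff.1 (index_eq_one.1 hm.symm)
    exact hab (isMulCommutative_iff.1 hcomm a b)
  obtain rfl : p = m.minFac := hp.unique (isLeast_minFac hm1)
  subst hm
  exact ⟨index_center_mul_sub_mul_card_pow_le G n, minFac_index_center_pow_mul_card_le G n⟩
end
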